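/- arXiv:0903.1877 — 4 statements merged into one kernel-verified Lean document; each statement's English description precedes it below -/
import Mathlib

section
/- Let m ≥ 2 be a natural number and let A_m : ℕ → ℕ → ℕ be defined by A_m(i,0) = 1 if i = 0 and 0 otherwise; A_m(0,n+1) = m·A_m(1,n); and A_m(i+1,n+1) = A_m(i,n) + (m−1)·A_m(i+2,n). Let f ∈ ℚ[[X]] be the power series whose n-th coefficient is A_m(0,n). Then f satisfies the algebraic equation (1 − m²X²)·f² + (m−2)·f − (m−1) = 0 in ℚ[[X]]. -/
open PowerSeries

/-- A sequence of power series with `H 0 = 0` and `H (i + 1) = X * (H i + c * H (i + 2))`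
vanishes identically. -/
theorem PowerSeries.eq_zero_of_three_term_recurrence {R : Type*} [CommRing R]
    (c : PowerSeries R) (H : ℕ → PowerSeries R) (h_zero : H 0 = 0)
    (h_succ : ∀ i, H (i + 1) = X * (H i + c * H (i + 2))) (i : ℕ) : H i = 0 := by
  have h_dvd : ∀ n i, (X : PowerSeries R) ^ n ∣ H i := by
    intro n
    induction n with
    | zero => simp
    | succ n ih =>
      rintro (_ | i)
      · simp [h_zero]
      · rw [h_succ, pow_succ']
        exact mul_dvd_mul_left X (dvd_add (ih i) (Dvd.dvd.mul_left (ih (i + 2)) c))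
  ext n
  simpa using X_pow_dvd_iff.mp (h_dvd (n + 1) i) n n.lt_succ_self

/-- Solutions of `F (i + 1) = X * (F i + c * F (i + 2))` are multiplicative up to the
normalization by `F 0`. -/
theorem PowerSeries.mul_eq_of_three_term_recurrence {R : Type*} [CommRing R]
    (c : PowerSeries R) (F : ℕ → PowerSeries R)
    (h_succ : ∀ i, F (i + 1) = X * (F i + c * F (i + 2))) (i j : ℕ) :
    F i * F j = F 0 * F (i + j) := by
  refine sub_eq_zero.mp (eq_zero_of_three_term_recurrence c
    (fun i => F i * F j - F 0 * F (i + j)) (by simp) (fun i => ?_) i)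
  have h_shift := h_succ (i + j)
  rw [show i + j + 1 = i + 1 + j by ring, show i + j + 2 = i + 2 + j by ring] at h_shift
  linear_combination F j * h_succ i - F 0 * h_shift

theorem generating_function_algebraic_equation (m : ℕ) (hm : 2 ≤ m) (A : ℕ → ℕ → ℕ)
    (hA_init : ∀ i, A i 0 = if i = 0 then 1 else 0)
    (hA_zero : ∀ n, A 0 (n + 1) = m * A 1 n)
    (hA_succ : ∀ i n, A (i + 1) (n + 1) = A i n + (m - 1) * A (i + 2) n)
    (f : PowerSeries ℚ) (hf : f = PowerSeries.mk fun n => (A 0 n : ℚ)) :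
    (1 - (m : PowerSeries ℚ) ^ 2 * X ^ 2) * f ^ 2 + ((m : PowerSeries ℚ) - 2) * f
      - ((m : PowerSeries ℚ) - 1) = 0 := by
  let F : ℕ → PowerSeries ℚ := fun i => PowerSeries.mk fun n => (A i n : ℚ)
  have h_cast : (m : PowerSeries ℚ) = C (m : ℚ) := (map_natCast C m).symm
  have h_cast_sub : (m : PowerSeries ℚ) - 1 = C ((m : ℚ) - 1) := by simp
  have h_zero : F 0 = 1 + X * ((m : PowerSeries ℚ) * F 1) := by
    rw [h_cast]
    ext (_ | n)
    · simp [F, hA_init]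
    · rw [map_add, coeff_succ_X_mul, coeff_C_mul]
      simp [F, coeff_one, hA_zero]
  have h_succ : ∀ i, F (i + 1) = X * (F i + ((m : PowerSeries ℚ) - 1) * F (i + 2)) := by
    intro i
    rw [h_cast_sub]
    ext (_ | n)
    · simp [F, hA_init]
    · rw [coeff_succ_X_mul, map_add, coeff_C_mul]
      simp [F, hA_succ, Nat.cast_sub (show 1 ≤ m by lia)]
  have h_sq := mul_eq_of_three_term_recurrence _ F h_succ 1 1
  have h_one := h_succ 0
  norm_num only at h_sq h_one
  change f = F 0 at hf
  rw [hf]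
  linear_combination ((m : PowerSeries ℚ) * F 0 - (m - 1) * (F 0 - 1 + m * X * F 1)) * h_zero
    + (m : PowerSeries ℚ) ^ 2 * X * F 0 * h_one
    - (m : PowerSeries ℚ) ^ 2 * X ^ 2 * (m - 1) * h_sq
end

section
/- Let m ≥ 2 be a natural number and let A_m : ℕ → ℕ → ℕ be defined by A_m(i,0) = 1 if i = 0 and 0 otherwise; A_m(0,n+1) = m·A_m(1,n); and A_m(i+1,n+1) = A_m(i,n) + (m−1)·A_m(i+2,n). For each i let F_i ∈ ℚ[[X]] be the power series whose n-th coefficient is A_m(i,n). If a ∈ ℚ[[X]] satisfies a = 1 + (m−1)·X²·a², then for every i ≥ 0, F_i = F_0 · (X·a)^i. -/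
open PowerSeries

/-- A sequence of power series in which each term is a multiple of `X` times the next vanishes. -/
lemma PowerSeries.eq_zero_of_forall_eq_X_mul_succ {R : Type*} [CommSemiring R] {D : ℕ → R⟦X⟧}
    (b : R⟦X⟧) (hD : ∀ i, D i = X * b * D (i + 1)) (i : ℕ) : D i = 0 := by
  have hdvd : ∀ n i, X ^ n ∣ D i := by
    intro n
    induction n with
    | zero => simp
    | succ n ih =>
      intro i
      rw [hD i, pow_succ']
      exact mul_dvd_mul (dvd_mul_right _ _) (ih (i + 1))
  ext n
  simpa using X_pow_dvd_iff.mp (hdvd (n + 1) i) n n.lt_succ_self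

theorem generating_function_geometric_factorization (m : ℕ) (hm : 2 ≤ m) (A : ℕ → ℕ → ℕ)
    (hA_init : ∀ i, A i 0 = if i = 0 then 1 else 0)
    (hA_zero : ∀ n, A 0 (n + 1) = m * A 1 n)
    (hA_succ : ∀ i n, A (i + 1) (n + 1) = A i n + (m - 1) * A (i + 2) n)
    (F : ℕ → PowerSeries ℚ) (hF : ∀ i, F i = PowerSeries.mk fun n => (A i n : ℚ))
    (a : PowerSeries ℚ)
    (ha : a = 1 + ((m : PowerSeries ℚ) - 1) * X ^ 2 * a ^ 2) :
    ∀ i : ℕ, F i = F 0 * (X * a) ^ i := by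
  have hrec : ∀ i, F (i + 1) = X * (F i + ((m : PowerSeries ℚ) - 1) * F (i + 2)) := by
    intro i
    have hcast : (m : PowerSeries ℚ) - 1 = C ((m : ℚ) - 1) := by simp
    ext n
    cases n with
    | zero => simp [hF, hA_init]
    | succ n =>
      rw [coeff_succ_X_mul, hcast, map_add, coeff_C_mul]
      simp only [hF, coeff_mk, hA_succ]
      push_cast [Nat.cast_sub (show 1 ≤ m by lia)]
      ring
  have hstep : ∀ i, F (i + 1) - X * a * F i = 0 :=
    PowerSeries.eq_zero_of_forall_eq_X_mul_succ (D := fun i => F (i + 1) - X * a * F i)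
      (((m : PowerSeries ℚ) - 1) * a) fun i => by
        linear_combination a * hrec i - F (i + 1) * ha
  intro i
  induction i with
  | zero => simp
  | succ i ih => rw [sub_eq_zero.mp (hstep i), ih]; ring
end

section
/- Let m ≥ 2 be a natural number and let A_m : ℕ → ℕ → ℕ be defined by A_m(i,0) = 1 if i = 0 and 0 otherwise; A_m(0,n+1) = m·A_m(1,n); and A_m(i+1,n+1) = A_m(i,n) + (m−1)·A_m(i+2,n). For each i let F_i ∈ ℚ[[X]] be the power series whose n-th coefficient is A_m(i,n). Then for every i ≥ 1, F_{i−1} · F_{i+1} = F_i², i.e., the sequence of generating functions F_0, F_1, F_2, … is a geometric progression in ℚ[[X]]. -/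
open PowerSeries

section ThreeTermRecurrence

variable {R : Type*} [CommRing R] {F : ℕ → PowerSeries R} {c : PowerSeries R}

/-- Along the recurrence `F (i + 1) = X * (F i + c * F (i + 2))`, the series `F i` has order at
least `i`. -/
theorem X_pow_dvd_of_three_term_recurrence
    (h : ∀ i, F (i + 1) = X * (F i + c * F (i + 2))) (k i : ℕ) :
    X ^ k ∣ F (i + k) := by
  induction k generalizing i with
  | zero => simp
  | succ k ih =>
    have h₂ : X ^ k ∣ F (i + k + 2) := by
      have := ih (i + 2)
      rwa [show i + 2 + k = i + k + 2 by ring] at this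
    rw [← add_assoc, h, pow_succ']
    exact mul_dvd_mul_left _ (dvd_add (ih i) (h₂.mul_left c))

theorem mul_sub_sq_eq_of_three_term_recurrence
    (h : ∀ i, F (i + 1) = X * (F i + c * F (i + 2))) (i : ℕ) :
    F i * F (i + 2) - F (i + 1) ^ 2 = c * (F (i + 1) * F (i + 3) - F (i + 2) ^ 2) := by
  apply X_mul_cancel
  linear_combination F (i + 1) * h (i + 1) - F (i + 2) * h i

theorem mul_eq_sq_of_three_term_recurrence
    (h : ∀ i, F (i + 1) = X * (F i + c * F (i + 2))) (i : ℕ) :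
    F i * F (i + 2) = F (i + 1) ^ 2 := by
  have iterate (k : ℕ) : F i * F (i + 2) - F (i + 1) ^ 2 =
      c ^ k * (F (i + k) * F (i + k + 2) - F (i + k + 1) ^ 2) := by
    induction k with
    | zero => simp
    | succ k ih =>
      rw [ih, mul_sub_sq_eq_of_three_term_recurrence h (i + k), pow_succ c, mul_assoc]
      rfl
  have hdvd (k : ℕ) : X ^ k ∣ F i * F (i + 2) - F (i + 1) ^ 2 := by
    have h₁ : X ^ k ∣ F (i + k + 1) := by
      simpa only [add_right_comm] using X_pow_dvd_of_three_term_recurrence h k (i + 1)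
    rw [iterate k]
    exact (dvd_sub ((X_pow_dvd_of_three_term_recurrence h k i).mul_right _)
      (dvd_pow h₁ two_ne_zero)).mul_left _
  rw [← sub_eq_zero]
  ext n
  rw [map_zero]
  exact X_pow_dvd_iff.mp (hdvd (n + 1)) n n.lt_succ_self

end ThreeTermRecurrence

theorem generating_functions_geometric_progression (m : ℕ) (hm : 2 ≤ m) (A : ℕ → ℕ → ℕ)
    (hA_init : ∀ i, A i 0 = if i = 0 then 1 else 0)
    (hA_zero : ∀ n, A 0 (n + 1) = m * A 1 n)
    (hA_succ : ∀ i n, A (i + 1) (n + 1) = A i n + (m - 1) * A (i + 2) n)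
    (F : ℕ → PowerSeries ℚ) (hF : ∀ i, F i = PowerSeries.mk fun n => (A i n : ℚ)) :
    ∀ i : ℕ, 1 ≤ i → F (i - 1) * F (i + 1) = F i ^ 2 := by
  have h (i : ℕ) : F (i + 1) = X * (F i + C ((m - 1 : ℕ) : ℚ) * F (i + 2)) := by
    ext n
    cases n with
    | zero => simp [hF, hA_init]
    | succ n =>
      rw [coeff_succ_X_mul, map_add, coeff_C_mul]
      simp [hF, hA_succ]
  rintro (_ | i) hi
  · omega
  · exact mul_eq_sq_of_three_term_recurrence h i
end

section
/- Let R be a commutative ring and c₁, c₂, c₃ ∈ R. Define A : ℕ → ℕ → R by A(i,0) = 1 if i = 0 and 0 otherwise; A(0,n+1) = c₃·A(1,n); and A(i+1,n+1) = c₁·A(i,n) + c₂·A(i+2,n). For a list p of steps in {U, D} of length n, say p is admissible ending at i if every partial sum of the values (+1 for U, −1 for D) is nonnegative and the total sum is i. Define poids(p) = c₁^{(number of U steps)} · ∏ over D steps (c₃ if that D step ends at height 0, else c₂). Then for all i and n, A(i,n) equals the sum of poids(p) over all admissible lists p of length n ending at i. -/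
/-- The value of a step: `true` is an up-step U (value `+1`),
`false` is a down-step D (value `-1`). -/
def stepVal (b : Bool) : ℤ := if b then 1 else -1

/-- The height of the lattice path `l` after its first `k` steps. -/
def heightAfter (l : List Bool) (k : ℕ) : ℤ := ((l.take k).map stepVal).sum

/-- A path is admissible ending at `i` if every partial sum of the step values is
nonnegative and the total sum is `i`. -/
def AdmissibleEndingAt (l : List Bool) (i : ℕ) : Prop :=
  (∀ k, 0 ≤ heightAfter l k) ∧ heightAfter l l.length = (i : ℤ)

/-- The "poids" of a path: `c₁` for each up-step, and for each down-step `c₃` if it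
lands on the x-axis and `c₂` otherwise. -/
def poids {R : Type*} [CommRing R] (c₁ c₂ c₃ : R) (l : List Bool) : R :=
  c₁ ^ l.count true *
    ∏ k ∈ Finset.range l.length,
      if l.getD k true = false then (if heightAfter l (k + 1) = 0 then c₃ else c₂) else 1

theorem heightAfter_append_singleton_of_le {l : List Bool} {k : ℕ} (b : Bool)
    (hk : k ≤ l.length) : heightAfter (l ++ [b]) k = heightAfter l k := by
  simp [heightAfter, List.take_append_of_le_length hk]

theorem heightAfter_of_length_le {l : List Bool} {k : ℕ} (hk : l.length ≤ k) :
    heightAfter l k = heightAfter l l.length := by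
  simp [heightAfter, List.take_of_length_le hk]

theorem heightAfter_append_singleton_length_succ (l : List Bool) (b : Bool) :
    heightAfter (l ++ [b]) (l.length + 1) = heightAfter l l.length + stepVal b := by
  have h : (l ++ [b]).take (l.length + 1) = l ++ [b] := List.take_of_length_le (by simp)
  simp [heightAfter, h]

/-- Appending an up-step raises the endpoint by one. -/
theorem admissibleEndingAt_append_true_succ (l : List Bool) (i : ℕ) :
    AdmissibleEndingAt (l ++ [true]) (i + 1) ↔ AdmissibleEndingAt l i := by
  have hs := heightAfter_append_singleton_length_succ l true
  simp only [stepVal, if_true] at hs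
  simp only [AdmissibleEndingAt, List.length_append, List.length_singleton, hs]
  push_cast
  constructor
  · rintro ⟨h, he⟩
    refine ⟨fun k => ?_, by lia⟩
    rcases le_total k l.length with hk | hk
    · simpa [heightAfter_append_singleton_of_le true hk] using h k
    · rw [heightAfter_of_length_le hk]; lia
  · rintro ⟨h, he⟩
    refine ⟨fun k => ?_, by lia⟩
    rcases Nat.lt_or_ge l.length k with hk | hk
    · rw [heightAfter_of_length_le (by simpa using hk), List.length_append,
        List.length_singleton, hs]
      lia
    · simpa [heightAfter_append_singleton_of_le true hk] using h k

/-- A path ending on the axis cannot finish with an up-step. -/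
theorem not_admissibleEndingAt_append_true_zero (l : List Bool) :
    ¬ AdmissibleEndingAt (l ++ [true]) 0 := by
  rintro ⟨h, he⟩
  have h0 := h l.length
  rw [heightAfter_append_singleton_of_le true le_rfl] at h0
  rw [List.length_append, List.length_singleton, heightAfter_append_singleton_length_succ] at he
  simp only [stepVal, if_true] at he
  push_cast at he
  lia

/-- Appending a down-step lowers the endpoint by one. -/
theorem admissibleEndingAt_append_false (l : List Bool) (i : ℕ) :
    AdmissibleEndingAt (l ++ [false]) i ↔ AdmissibleEndingAt l (i + 1) := by
  have hs := heightAfter_append_singleton_length_succ l false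
  simp only [stepVal, Bool.false_eq_true, if_false] at hs
  simp only [AdmissibleEndingAt, List.length_append, List.length_singleton, hs]
  push_cast
  constructor
  · rintro ⟨h, he⟩
    refine ⟨fun k => ?_, by lia⟩
    rcases le_total k l.length with hk | hk
    · simpa [heightAfter_append_singleton_of_le false hk] using h k
    · rw [heightAfter_of_length_le hk]; lia
  · rintro ⟨h, he⟩
    refine ⟨fun k => ?_, by lia⟩
    rcases Nat.lt_or_ge l.length k with hk | hk
    · rw [heightAfter_of_length_le (by simpa using hk), List.length_append,
        List.length_singleton, hs]
      lia
    · simpa [heightAfter_append_singleton_of_le false hk] using h k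

theorem poids_append_singleton {R : Type*} [CommRing R] (c₁ c₂ c₃ : R) (l : List Bool)
    (b : Bool) :
    poids c₁ c₂ c₃ (l ++ [b]) = poids c₁ c₂ c₃ l *
      if b then c₁ else if heightAfter l l.length = 1 then c₃ else c₂ := by
  have hprod : ∀ k ∈ Finset.range l.length,
      (if (l ++ [b]).getD k true = false then
        (if heightAfter (l ++ [b]) (k + 1) = 0 then c₃ else c₂) else 1) =
      if l.getD k true = false then (if heightAfter l (k + 1) = 0 then c₃ else c₂) else 1 := by
    intro k hk
    rw [Finset.mem_range] at hk
    rw [List.getD_append _ _ _ _ hk, heightAfter_append_singleton_of_le b hk]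
  have hlast : (l ++ [b]).getD l.length true = b := by simp
  unfold poids
  rw [List.length_append, List.length_singleton, Finset.prod_range_succ,
    Finset.prod_congr rfl hprod, hlast, heightAfter_append_singleton_length_succ]
  cases b
  · simp [stepVal, ← sub_eq_add_neg, sub_eq_zero, mul_assoc]
  · simp [pow_succ]
    ring

theorem sum_ofFn_succ {M : Type*} [AddCommMonoid M] (n : ℕ) (f : List Bool → M) :
    ∑ p : Fin (n + 1) → Bool, f (List.ofFn p) =
      ∑ p : Fin n → Bool, f (List.ofFn p ++ [true]) +
        ∑ p : Fin n → Bool, f (List.ofFn p ++ [false]) := by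
  rw [← (Fin.snocEquiv fun _ : Fin (n + 1) => Bool).sum_comp, Fintype.sum_prod_type,
    Fintype.sum_bool]
  have h (p : Fin n → Bool) (b : Bool) :
      List.ofFn (Fin.snoc (α := fun _ => Bool) p b) = List.ofFn p ++ [b] := by
    rw [List.ofFn_succ', List.concat_eq_append]
    simp
  simp only [Fin.snocEquiv, Equiv.coe_fn_mk, h]

open scoped Classical in
theorem generic_recurrence_counts_weighted_dyck_paths
    {R : Type*} [CommRing R] (c₁ c₂ c₃ : R) (A : ℕ → ℕ → R)
    (hA_init : ∀ i, A i 0 = if i = 0 then 1 else 0)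
    (hA_zero : ∀ n, A 0 (n + 1) = c₃ * A 1 n)
    (hA_succ : ∀ i n, A (i + 1) (n + 1) = c₁ * A i n + c₂ * A (i + 2) n)
    (i n : ℕ) :
    A i n = ∑ p : Fin n → Bool,
      if AdmissibleEndingAt (List.ofFn p) i then poids c₁ c₂ c₃ (List.ofFn p) else 0 := by
  induction n generalizing i with
  | zero => simp [hA_init, AdmissibleEndingAt, heightAfter, poids, eq_comm]
  | succ n ih =>
    rw [sum_ofFn_succ n fun l => if AdmissibleEndingAt l i then poids c₁ c₂ c₃ l else 0]
    cases i with
    | zero =>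
      rw [hA_zero, ih, Finset.mul_sum]
      simp only [not_admissibleEndingAt_append_true_zero, if_false, Finset.sum_const_zero,
        zero_add, admissibleEndingAt_append_false]
      refine Finset.sum_congr rfl fun p _ => ?_
      split_ifs with h
      · have h1 := h.2
        rw [poids_append_singleton, h1]
        simp [mul_comm]
      · simp
    | succ i =>
      rw [hA_succ, ih, ih, Finset.mul_sum, Finset.mul_sum]
      simp only [admissibleEndingAt_append_true_succ, admissibleEndingAt_append_false]
      congr 1
      · refine Finset.sum_congr rfl fun p _ => ?_
        simp [poids_append_singleton, mul_comm]
      · refine Finset.sum_congr rfl fun p _ => ?_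
        split_ifs with h
        · have hne : heightAfter (List.ofFn p) (List.ofFn p).length ≠ 1 := by
            rw [h.2]; lia
          rw [poids_append_singleton, if_neg hne]
          simp [mul_comm]
        · simp
end
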